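/- Let V be a real vector space, let g be a positive semidefinite symmetric bilinear form on V, let g' be a symmetric bilinear form on V, and let ε ≥ 0 be such that for every v ∈ V one has e^{-ε}·g(v,v) ≤ g'(v,v) ≤ e^{ε}·g(v,v). Then for all X, Y ∈ V one has |g'(X,Y) − g(X,Y)| ≤ ((e^{ε} − 1)/2)·(g(X,X) + g(Y,Y)). -/

import Mathlib

/-! The difference `h = g' - g` is a symmetric form dominated on the diagonal:
`|h v v| ≤ (c - 1) g v v` with `c = e^ε`. Polarization writes `4 h X Y` as the difference of the
diagonal values of `h` at `X + Y` and `X - Y`, and the parallelogram law for `g` adds up the two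
resulting bounds. -/

section BilinForm

variable {R M : Type*} [CommRing R] [AddCommGroup M] [Module R M]

theorem bilinForm_parallelogram_law (B : LinearMap.BilinForm R M) (x y : M) :
    B (x + y) (x + y) + B (x - y) (x - y) = 2 * (B x x + B y y) := by
  simp only [map_add, map_sub, LinearMap.add_apply, LinearMap.sub_apply]
  ring

theorem four_mul_bilinForm_apply_of_isSymm {B : LinearMap.BilinForm R M} (hB : B.IsSymm)
    (x y : M) : 4 * B x y = B (x + y) (x + y) - B (x - y) (x - y) := by
  simp only [map_add, map_sub, LinearMap.add_apply, LinearMap.sub_apply, hB.eq y x]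
  ring

theorem two_mul_abs_apply_le_of_abs_apply_self_le [LinearOrder R] [IsStrictOrderedRing R]
    {B C : LinearMap.BilinForm R M} (hB : B.IsSymm) (hBC : ∀ v, |B v v| ≤ C v v) (x y : M) :
    2 * |B x y| ≤ C x x + C y y := by
  refine le_of_mul_le_mul_left ?_ (zero_lt_two' R)
  calc 2 * (2 * |B x y|) = |4 * B x y| := by rw [abs_mul, Nat.abs_ofNat]; ring
    _ = |B (x + y) (x + y) - B (x - y) (x - y)| := by
      rw [four_mul_bilinForm_apply_of_isSymm hB]
    _ ≤ |B (x + y) (x + y)| + |B (x - y) (x - y)| := abs_sub _ _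
    _ ≤ C (x + y) (x + y) + C (x - y) (x - y) := add_le_add (hBC _) (hBC _)
    _ = 2 * (C x x + C y y) := bilinForm_parallelogram_law C x y

end BilinForm

section Field

variable {K : Type*} [Field K] [LinearOrder K] [IsStrictOrderedRing K]

theorem abs_sub_le_sub_one_mul_of_inv_mul_le_of_le_mul {a b c : K} (hc : 1 ≤ c)
    (hab : c⁻¹ * a ≤ b) (hba : b ≤ c * a) : |b - a| ≤ (c - 1) * a := by
  have hc₀ : 0 < c := zero_lt_one.trans_le hc
  -- The factor is `(c + c⁻¹ - 2) / (c - c⁻¹)`, simplified so that it makes sense at `c = 1`.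
  have h_nonneg : 0 ≤ (c + c⁻¹ - 2) * a :=
    calc 0 ≤ (c - 1) / (c + 1) * (c * a - c⁻¹ * a) :=
          mul_nonneg (div_nonneg (sub_nonneg.2 hc) (add_pos hc₀ one_pos).le)
            (sub_nonneg.2 (hab.trans hba))
      _ = (c + c⁻¹ - 2) * a := by field_simp; ring
  exact abs_le.2 ⟨by linarith, by linarith⟩

theorem stmt1_general {V : Type*} [AddCommGroup V] [Module K V]
    {g g' : LinearMap.BilinForm K V} (hsymm : (g' - g).IsSymm) {c : K} (hc : 1 ≤ c)
    (hbound : ∀ v : V, c⁻¹ * g v v ≤ g' v v ∧ g' v v ≤ c * g v v) (X Y : V) :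
    |g' X Y - g X Y| ≤ ((c - 1) / 2) * (g X X + g Y Y) := by
  have hdiag (v : V) : |(g' - g) v v| ≤ ((c - 1) • g) v v :=
    abs_sub_le_sub_one_mul_of_inv_mul_le_of_le_mul hc (hbound v).1 (hbound v).2
  have hpolar : 2 * |g' X Y - g X Y| ≤ (c - 1) * g X X + (c - 1) * g Y Y :=
    two_mul_abs_apply_le_of_abs_apply_self_le hsymm hdiag X Y
  linarith

end Field

/-- If `g` is a positive semidefinite symmetric bilinear form, `g'` a symmetric
bilinear form with `e^{-ε}·g(v,v) ≤ g'(v,v) ≤ e^{ε}·g(v,v)` for all `v`, then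
`|g'(X,Y) − g(X,Y)| ≤ ((e^{ε} − 1)/2)·(g(X,X) + g(Y,Y))`. -/
theorem stmt1 {V : Type*} [AddCommGroup V] [Module ℝ V]
    (g g' : LinearMap.BilinForm ℝ V) (hg : g.IsSymm) (hg' : g'.IsSymm)
    (hgpos : ∀ v : V, 0 ≤ g v v)
    (ε : ℝ) (hε : 0 ≤ ε)
    (hbound : ∀ v : V,
      Real.exp (-ε) * g v v ≤ g' v v ∧ g' v v ≤ Real.exp ε * g v v) :
    ∀ X Y : V,
      |g' X Y - g X Y| ≤ ((Real.exp ε - 1) / 2) * (g X X + g Y Y) := by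
  simp only [Real.exp_neg] at hbound
  exact stmt1_general (hg'.sub hg) (Real.one_le_exp hε) hbound
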